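/- Let (T, R, A) be weakly G-quasiapproximable. Then there exists b ≥ 0 such that for every integer i and every positive integer j, R_i ∩ T^c ⊆ ∪_{|n| ≤ (j+2b)A} Σ^n (R_{i+j} ∩ T^c). -/

import Mathlib

namespace GApprox

open CategoryTheory CategoryTheory.Limits CategoryTheory.Pretriangulated

universe w v u

variable (C : Type u) [Category.{v} C] [HasZeroObject C] [HasShift C ℤ]
  [Preadditive C] [∀ n : ℤ, (shiftFunctor C n).Additive] [Pretriangulated C]
  [HasCoproducts.{v} C]

/-- The right orthogonal of a class of objects. -/
def rOrth (A : Set C) : Set C := {X | ∀ a ∈ A, ∀ f : a ⟶ X, f = 0}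

/-- The left orthogonal of a class of objects. -/
def lOrth (A : Set C) : Set C := {X | ∀ a ∈ A, ∀ f : X ⟶ a, f = 0}

/-- `Hom(A, B) = 0`. -/
def homZero (A B : Set C) : Prop := ∀ a ∈ A, ∀ b ∈ B, ∀ f : a ⟶ b, f = 0

/-- The star operation `A ⋆ B`: objects `Y` admitting a distinguished triangle
`X ⟶ Y ⟶ Z ⟶ ΣX` with `X ∈ A` and `Z ∈ B`. -/
def starSet (A B : Set C) : Set C :=
  {Y | ∃ (X Z : C) (f : X ⟶ Y) (g : Y ⟶ Z) (h : Z ⟶ X⟦(1 : ℤ)⟧),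
    Triangle.mk f g h ∈ (distTriang C) ∧ X ∈ A ∧ Z ∈ B}

/-- The (strictly full) shift `Σⁿ A` of a class of objects. -/
def shiftSet (n : ℤ) (A : Set C) : Set C :=
  {X | ∃ a ∈ A, Nonempty (X ≅ (shiftFunctor C n).obj a)}

/-- An object is compact if any map to a coproduct factors through a finite subcoproduct. -/
def IsCompactObj (X : C) : Prop :=
  ∀ (α : Type v) (f : α → C) (g : X ⟶ ∐ f),
    ∃ (s : Finset α) (h : X ⟶ ∐ (fun i : {a : α // a ∈ s} => f i.1)),
      g = h ≫ Sigma.desc (fun i => Sigma.ι f i.1)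

/-- The class of compact objects `T^c`. -/
def compacts : Set C := {X | IsCompactObj C X}

/-- The category is compactly generated. -/
def CompactlyGenerated : Prop :=
  ∀ X : C, (∀ K ∈ compacts C, ∀ f : K ⟶ X, f = 0) → IsZero X

/-- Closure under direct summands (retracts), `smd`. -/
def smd (A : Set C) : Set C :=
  {X | ∃ Y ∈ A, ∃ (i : X ⟶ Y) (r : Y ⟶ X), i ≫ r = 𝟙 X}

/-- Closure of a class of objects under finite direct sums and extensions (`coprod`). -/
inductive extClosure (U : Set C) : C → Prop
  | of {X : C} : X ∈ U → extClosure U X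
  | zero {X : C} : IsZero X → extClosure U X
  | ext {X Y Z : C} (f : X ⟶ Y) (g : Y ⟶ Z) (h : Z ⟶ X⟦(1 : ℤ)⟧) :
      Triangle.mk f g h ∈ (distTriang C) → extClosure U X → extClosure U Z → extClosure U Y

/-- Closure of a class of objects under arbitrary coproducts, extensions and
direct summands. -/
inductive bigClosure (U : Set C) : C → Prop
  | of {X : C} : X ∈ U → bigClosure U X
  | zero {X : C} : IsZero X → bigClosure U X
  | coprod {α : Type v} (f : α → C) :
      (∀ i, bigClosure U (f i)) → ∀ {X : C}, (X ≅ ∐ f) → bigClosure U X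
  | ext {X Y Z : C} (f : X ⟶ Y) (g : Y ⟶ Z) (h : Z ⟶ X⟦(1 : ℤ)⟧) :
      Triangle.mk f g h ∈ (distTriang C) → bigClosure U X → bigClosure U Z → bigClosure U Y
  | retract {X Y : C} (i : X ⟶ Y) (r : Y ⟶ X) :
      i ≫ r = 𝟙 X → bigClosure U Y → bigClosure U X

/-- Closure of a class of objects under finite direct sums, `add`. -/
def addClosure (U : Set C) : Set C :=
  {X | ∃ (n : ℕ) (f : ULift.{v} (Fin n) → C), (∀ i, f i ∈ U) ∧ Nonempty (X ≅ ∐ f)}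

/-- Closure of a class of objects under arbitrary coproducts, `Add`. -/
def bigAddClosure (U : Set C) : Set C :=
  {X | ∃ (α : Type v) (f : α → C), (∀ i, f i ∈ U) ∧ Nonempty (X ≅ ∐ f)}

/-- `coprod_n(U)`. -/
def coprodPow (U : Set C) : ℕ → Set C
  | 0 => {X | IsZero X}
  | n + 1 => starSet C (addClosure C U) (coprodPow U n)

/-- `Coprod_n(U)`. -/
def coprodPowBig (U : Set C) : ℕ → Set C
  | 0 => {X | IsZero X}
  | n + 1 => starSet C (bigAddClosure C U) (coprodPowBig U n)

/-- `G[a,b] = ∪ { G^m : a ≤ m ≤ b }`. -/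
def unionIcc (G : ℤ → Set C) (a b : ℤ) : Set C := ⋃ m ∈ Set.Icc a b, G m

/-- `G(-∞,b] = ∪ { G^m : m ≤ b }`. -/
def unionIic (G : ℤ → Set C) (b : ℤ) : Set C := ⋃ m ∈ Set.Iic b, G m

/-- `G(-∞,∞) = ∪ { G^m : m ∈ ℤ }`. -/
def unionAll (G : ℤ → Set C) : Set C := ⋃ m : ℤ, G m

/-- `G^{[a,b]} = smd(coprod(G[a,b]))`. -/
def gInt (G : ℤ → Set C) (a b : ℤ) : Set C :=
  smd C {X | extClosure C (unionIcc C G a b) X}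

/-- `G^{(-∞,b]} = smd(coprod(G(-∞,b]))`. -/
def gIic (G : ℤ → Set C) (b : ℤ) : Set C :=
  smd C {X | extClosure C (unionIic C G b) X}

/-- `G^{[a,b]}_k = smd(coprod_k(G[a,b]))`. -/
def gIntPow (G : ℤ → Set C) (a b k : ℤ) : Set C :=
  smd C (coprodPow C (unionIcc C G a b) k.toNat)

/-- `Ḡ^{[a,b]}`. -/
def gBarInt (G : ℤ → Set C) (a b : ℤ) : Set C :=
  {X | bigClosure C (unionIcc C G a b) X}

/-- `Ḡ^{(-∞,b]}`. -/
def gBarIic (G : ℤ → Set C) (b : ℤ) : Set C :=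
  {X | bigClosure C (unionIic C G b) X}

/-- `Ḡ^{[a,b]}_k = smd(Coprod_k(G[a,b]))`. -/
def gBarIntPow (G : ℤ → Set C) (a b k : ℤ) : Set C :=
  smd C (coprodPowBig C (unionIcc C G a b) k.toNat)

/-- `M^G_n := G^{(-∞,-n]}`. -/
def MG (G : ℤ → Set C) (n : ℤ) : Set C := gIic C G (-n)

/-- `R^G_n := ⊥((M^G_n)^⊥)`, orthogonals taken in the whole category. -/
def RG (G : ℤ → Set C) (n : ℤ) : Set C := lOrth C (rOrth C (MG C G n))

/-- A pre-generating sequence. -/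
structure IsPreGenSeq (G : ℤ → Set C) : Prop where
  compact : ∀ i : ℤ, G i ⊆ compacts C
  generates : smd C {X | extClosure C (unionAll C G) X} = compacts C

/-- A generating sequence. -/
structure IsGenSeq (G : ℤ → Set C) extends IsPreGenSeq C G : Prop where
  shift_cond : ∀ n : ℤ,
    shiftSet C (-1) (G n) ∪ G n ∪ shiftSet C 1 (G n) ⊆ gInt C G (n - 1) (n + 1)

/-- A finite generating sequence. -/
structure IsFinGenSeq (G : ℤ → Set C) extends IsGenSeq C G : Prop where
  finite : ∀ i : ℤ, (G i).Finite

/-- ℕ-equivalence of generating sequences. -/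
def GenSeqNEquiv (G G' : ℤ → Set C) : Prop :=
  ∃ N : ℤ, 0 ≤ N ∧ (∀ n : ℤ, G' n ⊆ gInt C G (n - N) (n + N)) ∧
    ∀ n : ℤ, G n ⊆ gInt C G' (n - N) (n + N)

/-- ℕ-equivalence of (extended good) metrics. -/
def MetricNEquiv (M N : ℤ → Set C) : Prop :=
  ∃ n : ℤ, 0 ≤ n ∧ (∀ i : ℤ, M (i + n) ⊆ N i) ∧ ∀ i : ℤ, N (i + n) ⊆ M i

/-- An extended good metric. -/
structure IsExtGoodMetric (M : ℤ → Set C) : Prop where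
  zero_mem : ∀ (n : ℤ) (X : C), IsZero X → X ∈ M n
  iso_closed : ∀ (n : ℤ) ⦃X Y : C⦄, (X ≅ Y) → X ∈ M n → Y ∈ M n
  star_subset : ∀ n : ℤ, starSet C (M n) (M n) ⊆ M n
  shift_one : ∀ n : ℤ, shiftSet C 1 (M (n + 1)) ⊆ M n
  antitone : ∀ n : ℤ, M (n + 1) ⊆ M n
  shift_neg_one : ∀ n : ℤ, shiftSet C (-1) (M (n + 1)) ⊆ M n

/-- An orthogonal metric. -/
structure IsOrthMetric (M : ℤ → Set C) extends IsExtGoodMetric C M : Prop where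
  orth : ∀ n : ℤ, lOrth C (rOrth C (M n)) = M n

/-- The closure of the compacts `T̄^c := ∩ₙ T^c ⋆ Rₙ`. -/
def closCompacts (Rm : ℤ → Set C) : Set C := ⋂ n : ℤ, starSet C (compacts C) (Rm n)

/-- `(T, R, A)` is `G`-preapproximable. -/
structure IsGPreApprox (G Rm : ℤ → Set C) (A : ℤ) : Prop where
  orthMetric : IsOrthMetric C Rm
  A_pos : 0 < A
  cond0 : ∀ i : ℤ, MG C G i ⊆ ⋃ n ∈ {n : ℤ | |n| ≤ A}, shiftSet C n (MG C G (i + 1))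
  cond1 : ∀ i : ℤ, MG C G (i + A) ⊆ Rm i ∩ compacts C
  cond2 : ∀ n : ℤ, ∃ N : ℤ, ∀ i : ℤ, N ≤ i → homZero C (G n) (Rm i)

/-- There is a distinguished triangle `E ⟶ F ⟶ D ⟶ ΣE` with `E ∈ S` and `D ∈ D`. -/
def approxTriangle (F : C) (S D : Set C) : Prop :=
  ∃ (E Dd : C) (f : E ⟶ F) (g : F ⟶ Dd) (h : Dd ⟶ E⟦(1 : ℤ)⟧),
    Triangle.mk f g h ∈ (distTriang C) ∧ E ∈ S ∧ Dd ∈ D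

/-- `(T, R, A)` is weakly `G`-approximable. -/
structure IsWeakGApprox (G Rm : ℤ → Set C) (A : ℤ) extends IsGPreApprox C G Rm A : Prop where
  hom_vanish : ∀ n i : ℤ, A ≤ n + i → homZero C (G n) (Rm i)
  approx : ∀ i : ℤ, ∀ F ∈ Rm i,
    approxTriangle C F (gBarInt C G (-A - i) (A - i)) (Rm (i + 1))

/-- `(T, R, A)` is `G`-approximable. -/
structure IsGApprox (G Rm : ℤ → Set C) (A : ℤ) extends IsWeakGApprox C G Rm A : Prop where
  approx' : ∀ i : ℤ, ∀ F ∈ Rm i,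
    approxTriangle C F (gBarIntPow C G (-A - i) (A - i) A) (Rm (i + 1))

/-- `(T, R, A)` is weakly `G`-quasiapproximable. -/
structure IsWeakGQuasiApprox (G Rm : ℤ → Set C) (A : ℤ) extends IsGPreApprox C G Rm A : Prop where
  hom_vanish : ∀ n i : ℤ, A ≤ n + i → homZero C (G n) (Rm i)
  approx : ∀ i : ℤ, ∀ F ∈ Rm i ∩ closCompacts C Rm,
    approxTriangle C F (gBarInt C G (-A - i) (A - i)) (Rm (i + 1) ∩ closCompacts C Rm)

/-- `(T, R, A)` is `G`-quasiapproximable. -/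
structure IsGQuasiApprox (G Rm : ℤ → Set C) (A : ℤ) extends IsWeakGQuasiApprox C G Rm A : Prop where
  approx' : ∀ i : ℤ, ∀ F ∈ Rm i ∩ closCompacts C Rm,
    approxTriangle C F (gBarIntPow C G (-A - i) (A - i) A) (Rm (i + 1) ∩ closCompacts C Rm)

/-- The coproduct of a sequence of objects. -/
noncomputable def seqCoprod (E : ℕ → C) : C := ∐ (fun n : ULift.{v} ℕ => E n.down)

/-- The canonical inclusion into the coproduct of a sequence. -/
noncomputable def seqInj (E : ℕ → C) (n : ℕ) : E n ⟶ seqCoprod C E :=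
  Sigma.ι (fun n : ULift.{v} ℕ => E n.down) (ULift.up n)

/-- The map `1 - shift` on the coproduct of a sequence. -/
noncomputable def oneMinusShift (E : ℕ → C) (e : ∀ n, E n ⟶ E (n + 1)) :
    seqCoprod C E ⟶ seqCoprod C E :=
  Sigma.desc (fun n => seqInj C E n.down - e n.down ≫ seqInj C E (n.down + 1))

/-- `H`, equipped with `π`, `δ`, is a homotopy colimit of the sequence `E`. -/
def IsHocolim (E : ℕ → C) (e : ∀ n, E n ⟶ E (n + 1)) (H : C)
    (π : seqCoprod C E ⟶ H) (δ : H ⟶ (seqCoprod C E)⟦(1 : ℤ)⟧) : Prop :=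
  Triangle.mk (oneMinusShift C E e) π δ ∈ (distTriang C)

/-- A single compact generator. -/
def IsCompactGenerator (G₀ : C) : Prop :=
  IsCompactObj C G₀ ∧ ∀ X : C, (∀ n : ℤ, ∀ f : (shiftFunctor C n).obj G₀ ⟶ X, f = 0) → IsZero X

/-- The strictly full subcategory `{Σʲ G₀}`. -/
def singletonShift (G₀ : C) (j : ℤ) : Set C :=
  {X | Nonempty (X ≅ (shiftFunctor C j).obj G₀)}

/-- The generating sequence `Gⁿ := {Σ⁻ⁿ G₀}`. -/
def genSeqNeg (G₀ : C) (n : ℤ) : Set C := singletonShift C G₀ (-n)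

/-- The generating sequence `Gⁿ := {Σⁿ G₀}`. -/
def genSeqPos (G₀ : C) (n : ℤ) : Set C := singletonShift C G₀ n

/-!
Let `F ∈ Rᵢ` be compact. Being a retract of a finite extension of objects of `G`, it satisfies
`Hom(F, Rₘ) = 0` for `m ≫ 0`. Iterating the approximation triangles of `F` turns `F` into an object
of such an `Rₘ` at the cost of objects of `Ḡ^{(-∞,A-i]}`; since a map from a compact object to an
object of `Ḡ^{(-∞,A-i]}` factors through a finite extension of objects of `G(-∞,A-i]`, so does the
identity of `F`. Hence `F ∈ M^G_{i-A}`, and the shifts of condition (0) carry `M^G_{i-A}` to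
`M^G_{i+j+A} ⊆ R_{i+j}` in `j + 2A` steps.
-/

section Shift

variable {C}

omit [HasZeroObject C] [Preadditive C] [∀ n : ℤ, (shiftFunctor C n).Additive]
  [Pretriangulated C] [HasCoproducts.{v} C]

theorem shiftSet_mono {S S' : Set C} (h : S ⊆ S') (n : ℤ) : shiftSet C n S ⊆ shiftSet C n S' :=
  fun _ ⟨Y, hY, e⟩ => ⟨Y, h hY, e⟩

theorem subset_shiftSet_zero (S : Set C) : S ⊆ shiftSet C 0 S :=
  fun X hX => ⟨X, hX, ⟨((shiftFunctorZero C ℤ).app X).symm⟩⟩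

theorem shiftSet_shiftSet_subset (m n : ℤ) (S : Set C) :
    shiftSet C m (shiftSet C n S) ⊆ shiftSet C (n + m) S := by
  rintro X ⟨Y, ⟨Z, hZ, ⟨eYZ⟩⟩, ⟨eXY⟩⟩
  exact ⟨Z, hZ,
    ⟨eXY ≪≫ (shiftFunctor C m).mapIso eYZ ≪≫ ((shiftFunctorAdd C n m).app Z).symm⟩⟩

theorem subset_iUnion_shiftSet_add_nat {M : ℤ → Set C} {B : ℤ}
    (hM : ∀ i : ℤ, M i ⊆ ⋃ n ∈ {n : ℤ | |n| ≤ B}, shiftSet C n (M (i + 1))) (i : ℤ) (k : ℕ) :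
    M i ⊆ ⋃ n ∈ {n : ℤ | |n| ≤ k * B}, shiftSet C n (M (i + k)) := by
  induction k with
  | zero =>
    intro X hX
    exact Set.mem_biUnion (x := 0) (by simp) (subset_shiftSet_zero _ (by simpa using hX))
  | succ k ih =>
    intro X hX
    obtain ⟨n, hn, hXn⟩ := Set.mem_iUnion₂.1 (ih hX)
    obtain ⟨Y, hY, eXY⟩ := hXn
    obtain ⟨m, hm, hYm⟩ := Set.mem_iUnion₂.1 (hM _ hY)
    have hmn : |m + n| ≤ ((k + 1 : ℕ) : ℤ) * B := by
      have := abs_add_le m n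
      rw [Set.mem_ofPred_eq] at hm hn
      push_cast
      linarith
    refine Set.mem_biUnion (x := m + n) hmn ?_
    rw [Nat.cast_succ, ← add_assoc]
    exact shiftSet_shiftSet_subset n m _ ⟨Y, hYm, eXY⟩

end Shift

section Union

variable {C}

omit [Category.{v} C] [HasZeroObject C] [HasShift C ℤ] [Preadditive C]
  [∀ n : ℤ, (shiftFunctor C n).Additive] [Pretriangulated C] [HasCoproducts.{v} C]

theorem unionIcc_subset_unionIic (G : ℤ → Set C) (a b : ℤ) : unionIcc C G a b ⊆ unionIic C G b :=
  Set.biUnion_subset_biUnion_left fun _ hm => hm.2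

theorem unionIic_mono (G : ℤ → Set C) : Monotone (unionIic C G) :=
  fun _ _ h => Set.biUnion_subset_biUnion_left (Set.Iic_subset_Iic.2 h)

theorem unionIic_subset_unionAll (G : ℤ → Set C) (b : ℤ) : unionIic C G b ⊆ unionAll C G :=
  Set.iUnion₂_subset_iUnion _ G

end Union

section Closure

variable {C}

omit [HasCoproducts.{v} C] in
theorem extClosure_mono {U V : Set C} (h : U ⊆ V) {X : C} (hX : extClosure C U X) :
    extClosure C V X := by
  induction hX with
  | of hX => exact .of (h hX)
  | zero hX => exact .zero hX
  | ext f g δ hT _ _ ihX ihZ => exact .ext f g δ hT ihX ihZ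

theorem bigClosure_mono {U V : Set C} (h : U ⊆ V) {X : C} (hX : bigClosure C U X) :
    bigClosure C V X := by
  induction hX with
  | of hX => exact .of (h hX)
  | zero hX => exact .zero hX
  | coprod f _ e ih => exact .coprod f ih e
  | ext f g δ hT _ _ ihX ihZ => exact .ext f g δ hT ihX ihZ
  | retract i r hir _ ih => exact .retract i r hir ih

theorem gBarInt_subset_gBarIic (G : ℤ → Set C) (a b : ℤ) : gBarInt C G a b ⊆ gBarIic C G b :=
  fun _ => bigClosure_mono (unionIcc_subset_unionIic G a b)

theorem gBarIic_mono (G : ℤ → Set C) : Monotone (gBarIic C G) :=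
  fun _ _ h _ => bigClosure_mono (unionIic_mono G h)

omit [HasCoproducts.{v} C] in
theorem approxTriangle_mono {F : C} {S S' D : Set C} (hS : S ⊆ S')
    (h : approxTriangle C F S D) : approxTriangle C F S' D := by
  obtain ⟨E, Z, f, g, δ, hT, hE, hZ⟩ := h
  exact ⟨E, Z, f, g, δ, hT, hS hE, hZ⟩

omit [HasCoproducts.{v} C] in
open scoped ZeroObject in
theorem zero_mem_MG (G : ℤ → Set C) (i : ℤ) : (0 : C) ∈ MG C G i :=
  ⟨0, .zero (isZero_zero C), 𝟙 0, 𝟙 0, Category.comp_id _⟩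

theorem IsPreGenSeq.MG_subset_compacts {G : ℤ → Set C} (hG : IsPreGenSeq C G) (i : ℤ) :
    MG C G i ⊆ compacts C := by
  rintro X ⟨Y, hY, retraction⟩
  rw [← hG.generates]
  exact ⟨Y, extClosure_mono (unionIic_subset_unionAll G _) hY, retraction⟩

open scoped ZeroObject in
theorem compacts_subset_closCompacts {R : ℤ → Set C} (hR : ∀ n, (0 : C) ∈ R n) :
    compacts C ⊆ closCompacts C R :=
  fun X hX => Set.mem_iInter.2 fun n =>
    ⟨X, 0, 𝟙 X, 0, 0, contractible_distinguished X, hX, hR n⟩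

end Closure

section Orthogonal

variable {C}

omit [HasZeroObject C] [HasShift C ℤ] [∀ n : ℤ, (shiftFunctor C n).Additive]
  [Pretriangulated C] [HasCoproducts.{v} C] in
theorem mem_lOrth_of_retract {S : Set C} {X Y : C} {i : X ⟶ Y} {r : Y ⟶ X} (hir : i ≫ r = 𝟙 X)
    (hY : Y ∈ lOrth C S) : X ∈ lOrth C S := by
  intro Z hZ f
  rw [← Category.id_comp f, ← hir, Category.assoc, hY Z hZ (r ≫ f), comp_zero]

omit [HasCoproducts.{v} C] in
theorem mem_lOrth_of_distinguished {S : Set C} {X Y Z : C} {f : X ⟶ Y} {g : Y ⟶ Z}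
    {δ : Z ⟶ X⟦(1 : ℤ)⟧} (hT : Triangle.mk f g δ ∈ distTriang C) (hX : X ∈ lOrth C S)
    (hZ : Z ∈ lOrth C S) : Y ∈ lOrth C S := by
  intro W hW φ
  obtain ⟨ψ, hψ⟩ : ∃ ψ : Z ⟶ W, φ = g ≫ ψ :=
    Triangle.yoneda_exact₂ _ hT φ (hX W hW (f ≫ φ))
  rw [hψ, hZ W hW ψ, comp_zero]

omit [HasCoproducts.{v} C] in
theorem eventually_mem_lOrth_of_extClosure {ι : Type*} {l : Filter ι} {U : Set C} {R : ι → Set C}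
    (hU : ∀ X ∈ U, ∀ᶠ i in l, X ∈ lOrth C (R i)) {X : C} (hX : extClosure C U X) :
    ∀ᶠ i in l, X ∈ lOrth C (R i) := by
  induction hX with
  | of hX => exact hU _ hX
  | zero hX => exact .of_forall fun i Y _ f => hX.eq_of_src f 0
  | ext f g δ hT _ _ ihX ihZ =>
    filter_upwards [ihX, ihZ] with i hX hZ using mem_lOrth_of_distinguished hT hX hZ

theorem IsPreGenSeq.eventually_mem_lOrth {ι : Type*} {l : Filter ι} {G : ℤ → Set C}
    {R : ι → Set C} (hG : IsPreGenSeq C G) (hR : ∀ n, ∀ᶠ i in l, homZero C (G n) (R i)) {X : C}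
    (hX : X ∈ compacts C) : ∀ᶠ i in l, X ∈ lOrth C (R i) := by
  rw [← hG.generates] at hX
  obtain ⟨Y, hY, i, r, hir⟩ := hX
  have hYorth : ∀ᶠ i in l, Y ∈ lOrth C (R i) := by
    refine eventually_mem_lOrth_of_extClosure (fun K hK => ?_) hY
    obtain ⟨n, hKn⟩ := Set.mem_iUnion.1 hK
    exact (hR n).mono fun i hi => hi K hKn
  exact hYorth.mono fun _ => mem_lOrth_of_retract hir

end Orthogonal

section Truncation

variable {C}

omit [HasZeroObject C] [HasShift C ℤ] [∀ n : ℤ, (shiftFunctor C n).Additive] [Pretriangulated C]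

open Classical in
/-- The idempotent endomorphism of the coproduct `∐ f` which projects onto the finite subcoproduct
indexed by `s`; compactness is most easily handled through these endomorphisms. -/
noncomputable def sigmaTrunc {α : Type v} (f : α → C) (s : Finset α) : ∐ f ⟶ ∐ f :=
  ∑ a ∈ s, Sigma.π f a ≫ Sigma.ι f a

theorem ι_sigmaTrunc {α : Type v} (f : α → C) {s : Finset α} {a : α} (ha : a ∈ s) :
    Sigma.ι f a ≫ sigmaTrunc f s = Sigma.ι f a := by
  classical
  rw [sigmaTrunc, Preadditive.comp_sum, Finset.sum_eq_single_of_mem a ha]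
  · rw [Sigma.ι_π_eq_id_assoc]
  · intro b _ hba
    rw [← Category.assoc, Sigma.ι_π_of_ne f hba.symm, zero_comp]

theorem sigmaTrunc_comp_of_subset {α : Type v} (f : α → C) {s t : Finset α} (hst : s ⊆ t) :
    sigmaTrunc f s ≫ sigmaTrunc f t = sigmaTrunc f s := by
  conv_lhs => rw [sigmaTrunc, Preadditive.sum_comp]
  exact Finset.sum_congr rfl fun a ha => by rw [Category.assoc, ι_sigmaTrunc f (hst ha)]

end Truncation

section Compact

variable {C}

theorem isCompactObj_iff_exists_eq_sum {X : C} : IsCompactObj C X ↔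
    ∀ (α : Type v) (f : α → C) (g : X ⟶ ∐ f),
      ∃ (s : Finset α) (φ : ∀ a, X ⟶ f a), g = ∑ a ∈ s, φ a ≫ Sigma.ι f a := by
  classical
  refine forall₃_congr fun α f g => ⟨?_, ?_⟩
  · rintro ⟨s, h, rfl⟩
    have htrunc : (Sigma.desc fun i : {a // a ∈ s} => Sigma.ι f i.1) ≫ sigmaTrunc f s =
        Sigma.desc fun i : {a // a ∈ s} => Sigma.ι f i.1 :=
      Sigma.hom_ext _ _ fun i => by rw [Sigma.ι_desc_assoc, Sigma.ι_desc, ι_sigmaTrunc f i.2]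
    refine ⟨s, fun a => (h ≫ Sigma.desc fun i => Sigma.ι f i.1) ≫ Sigma.π f a, ?_⟩
    conv_lhs => rw [← htrunc, sigmaTrunc]
    simp only [Preadditive.comp_sum, Category.assoc]
  · rintro ⟨s, φ, rfl⟩
    refine ⟨s, ∑ i ∈ s.attach, φ i.1 ≫ Sigma.ι (fun i : {a // a ∈ s} => f i.1) i, ?_⟩
    simp only [Preadditive.sum_comp, Category.assoc, Sigma.ι_desc]
    exact (Finset.sum_attach s fun a => φ a ≫ Sigma.ι f a).symm

theorem isCompactObj_iff_exists_comp_sigmaTrunc {X : C} : IsCompactObj C X ↔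
    ∀ (α : Type v) (f : α → C) (g : X ⟶ ∐ f), ∃ s : Finset α, g ≫ sigmaTrunc f s = g := by
  classical
  refine isCompactObj_iff_exists_eq_sum.trans (forall₃_congr fun α f g => exists_congr fun s => ?_)
  constructor
  · rintro ⟨φ, rfl⟩
    rw [Preadditive.sum_comp]
    exact Finset.sum_congr rfl fun a ha => by rw [Category.assoc, ι_sigmaTrunc f ha]
  · intro hg
    refine ⟨fun a => g ≫ Sigma.π f a, ?_⟩
    conv_lhs => rw [← hg, sigmaTrunc]
    simp only [Preadditive.comp_sum, Category.assoc]

theorem isCompactObj_of_isZero {X : C} (hX : IsZero X) : IsCompactObj C X :=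
  isCompactObj_iff_exists_comp_sigmaTrunc.2 fun _ _ _ => ⟨∅, hX.eq_of_src _ _⟩

theorem IsCompactObj.of_distinguished {X Y Z : C} {u : X ⟶ Y} {w : Y ⟶ Z} {δ : Z ⟶ X⟦(1 : ℤ)⟧}
    (hT : Triangle.mk u w δ ∈ distTriang C) (hX : IsCompactObj C X) (hZ : IsCompactObj C Z) :
    IsCompactObj C Y := by
  classical
  rw [isCompactObj_iff_exists_comp_sigmaTrunc] at hX hZ ⊢
  intro α f g
  obtain ⟨s, hs⟩ := hX α f (u ≫ g)
  have hu : u ≫ (g - g ≫ sigmaTrunc f s) = 0 := by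
    rw [Preadditive.comp_sub, ← Category.assoc, hs, sub_self]
  obtain ⟨m, hm⟩ : ∃ m : Z ⟶ ∐ f, g - g ≫ sigmaTrunc f s = w ≫ m :=
    Triangle.yoneda_exact₂ _ hT _ hu
  obtain ⟨t, ht⟩ := hZ α f m
  have hg : g = g ≫ sigmaTrunc f s + w ≫ m ≫ sigmaTrunc f t := by
    rw [ht, ← hm, add_sub_cancel]
  refine ⟨s ∪ t, ?_⟩
  rw [hg, Preadditive.add_comp]
  simp only [Category.assoc, sigmaTrunc_comp_of_subset f Finset.subset_union_left,
    sigmaTrunc_comp_of_subset f Finset.subset_union_right]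

theorem IsCompactObj.shift {X : C} (hX : IsCompactObj C X) (n : ℤ) : IsCompactObj C (X⟦n⟧) := by
  rw [isCompactObj_iff_exists_eq_sum] at hX ⊢
  intro α f g
  let adj : shiftFunctor C n ⊣ shiftFunctor C (-n) := (shiftEquiv C n).toAdjunction
  obtain ⟨s, φ, hφ⟩ := hX α (fun a => (f a)⟦-n⟧)
    (adj.homEquiv X (∐ f) g ≫ inv (sigmaComparison (shiftFunctor C (-n)) f))
  have hg : adj.homAddEquiv X (∐ f) g = ∑ a ∈ s, φ a ≫ (Sigma.ι f a)⟦-n⟧' := by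
    rw [IsIso.comp_inv_eq, Preadditive.sum_comp] at hφ
    simpa only [Category.assoc, ι_comp_sigmaComparison, Adjunction.homAddEquiv_apply] using hφ
  refine ⟨s, fun a => (adj.homEquiv X (f a)).symm (φ a), ?_⟩
  rw [← AddEquiv.eq_symm_apply, map_sum] at hg
  simpa only [Adjunction.homAddEquiv_symm_apply, Adjunction.homEquiv_naturality_right_symm] using hg

theorem isCompactObj_of_extClosure {U : Set C} (hU : U ⊆ compacts C) {X : C}
    (hX : extClosure C U X) : IsCompactObj C X := by
  induction hX with
  | of hX => exact hU hX
  | zero hX => exact isCompactObj_of_isZero hX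
  | ext f g δ hT _ _ ihX ihZ => exact .of_distinguished hT ihX ihZ

end Compact

section Factoring

variable {C}

omit [HasCoproducts.{v} C]

open scoped ZeroObject in
/-- The morphisms `K ⟶ X` that factor through an object of `coprod(U)`. They form a submonoid
because `coprod(U)` is closed under finite direct sums. -/
def extFactoring (U : Set C) (K X : C) : AddSubmonoid (K ⟶ X) where
  carrier := {φ | ∃ E, extClosure C U E ∧ ∃ (a : K ⟶ E) (b : E ⟶ X), a ≫ b = φ}
  zero_mem' := ⟨0, .zero (isZero_zero C), 0, 0, zero_comp⟩
  add_mem' := by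
    rintro _ _ ⟨E, hE, a, b, rfl⟩ ⟨E', hE', a', b', rfl⟩
    exact ⟨E ⊞ E', .ext _ _ _ (binaryBiproductTriangle_distinguished E E') hE hE',
      biprod.lift a a', biprod.desc b b', biprod.lift_desc⟩

theorem comp_mem_extFactoring {U : Set C} {K X Y : C} {φ : K ⟶ X} (hφ : φ ∈ extFactoring U K X)
    (g : X ⟶ Y) : φ ≫ g ∈ extFactoring U K Y := by
  obtain ⟨E, hE, a, b, rfl⟩ := hφ
  exact ⟨E, hE, a, b ≫ g, (Category.assoc _ _ _).symm⟩

theorem mem_smd_iff_id_mem_extFactoring {U : Set C} {X : C} :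
    X ∈ smd C {Y | extClosure C U Y} ↔ 𝟙 X ∈ extFactoring U X X :=
  Iff.rfl

/-- The axioms only complete morphisms of triangles non-uniquely, so `m ≫ l` need not be `ψ.hom₂`;
as both agree after composition with `T₂.mor₂`, the error factors through `T₂.mor₁`. -/
theorem exists_distinguished_factorization {T₁ T₂ : Triangle C} (hT₁ : T₁ ∈ distTriang C)
    (hT₂ : T₂ ∈ distTriang C) (ψ : T₁ ⟶ T₂) {X : C} {a : T₁.obj₁ ⟶ X} {b : X ⟶ T₂.obj₁}
    (hab : a ≫ b = ψ.hom₁) :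
    ∃ (Y : C) (f : X ⟶ Y) (g : Y ⟶ T₁.obj₃) (δ : T₁.obj₃ ⟶ X⟦(1 : ℤ)⟧),
      Triangle.mk f g δ ∈ distTriang C ∧
        ∃ (m : T₁.obj₂ ⟶ Y) (l : Y ⟶ T₂.obj₂) (e : T₁.obj₂ ⟶ T₂.obj₁),
          ψ.hom₂ = m ≫ l + e ≫ T₂.mor₁ := by
  obtain ⟨Y, f, g, hT⟩ := distinguished_cocone_triangle₂ (T₁.mor₃ ≫ a⟦(1 : ℤ)⟧')
  obtain ⟨m, -, hm⟩ : ∃ m : T₁.obj₂ ⟶ Y, T₁.mor₁ ≫ m = a ≫ f ∧ T₁.mor₂ ≫ 𝟙 _ = m ≫ g :=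
    complete_distinguished_triangle_morphism₂ _ _ hT₁ hT a (𝟙 _) (Category.id_comp _).symm
  have hψ : (T₁.mor₃ ≫ a⟦(1 : ℤ)⟧') ≫ b⟦(1 : ℤ)⟧' = ψ.hom₃ ≫ T₂.mor₃ := by
    rw [Category.assoc, ← Functor.map_comp, hab, ψ.comm₃]
  obtain ⟨l, -, hl⟩ : ∃ l : Y ⟶ T₂.obj₂, f ≫ l = b ≫ T₂.mor₁ ∧ g ≫ ψ.hom₃ = l ≫ T₂.mor₂ :=
    complete_distinguished_triangle_morphism₂ _ _ hT hT₂ b ψ.hom₃ hψ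
  have hcorr : (ψ.hom₂ - m ≫ l) ≫ T₂.mor₂ = 0 := by
    rw [Preadditive.sub_comp, ← ψ.comm₂, Category.assoc, ← hl, ← Category.assoc, ← hm,
      Category.comp_id, sub_self]
  obtain ⟨e, he⟩ := Triangle.coyoneda_exact₂ T₂ hT₂ _ hcorr
  exact ⟨Y, f, g, _, hT, m, l, e, by rw [← he, add_sub_cancel]⟩

end Factoring

section CompactFactoring

variable {C}

theorem mem_extFactoring_of_comp_mem {U : Set C} (hU : U ⊆ compacts C) {T : Triangle C}
    (hT : T ∈ distTriang C)
    (hfac : ∀ K : C, IsCompactObj C K → ∀ φ : K ⟶ T.obj₁, φ ∈ extFactoring U K T.obj₁)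
    {K : C} (hK : IsCompactObj C K) {φ : K ⟶ T.obj₂}
    (hφ : φ ≫ T.mor₂ ∈ extFactoring U K T.obj₃) : φ ∈ extFactoring U K T.obj₂ := by
  obtain ⟨E, hE, p, q, hpq⟩ := hφ
  obtain ⟨K', i, d, hT'⟩ := distinguished_cocone_triangle₁ p
  have hK' : IsCompactObj C K' :=
    .of_distinguished (inv_rot_of_distTriang _ hT') ((isCompactObj_of_extClosure hU hE).shift (-1))
      hK
  obtain ⟨c, hc₁, hc₃⟩ := complete_distinguished_triangle_morphism₁ _ _ hT' hT φ q hpq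
  let ψ : Triangle.mk i p d ⟶ T := Triangle.homMk _ _ c φ q hc₁ hpq hc₃
  obtain ⟨X, hX, a, b, hab⟩ := hfac K' hK' c
  obtain ⟨Y, f, g, δ, hTY, m, l, e, hφml⟩ := exists_distinguished_factorization hT' hT ψ hab
  have hml : m ≫ l ∈ extFactoring U K T.obj₂ := ⟨Y, .ext f g δ hTY hX hE, m, l, rfl⟩
  have he : e ≫ T.mor₁ ∈ extFactoring U K T.obj₂ := comp_mem_extFactoring (hfac K hK e) _
  rw [show φ = m ≫ l + e ≫ T.mor₁ from hφml]
  exact add_mem hml he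

theorem mem_extFactoring_of_bigClosure {U : Set C} (hU : U ⊆ compacts C) {X : C}
    (hX : bigClosure C U X) (K : C) (hK : IsCompactObj C K) (φ : K ⟶ X) :
    φ ∈ extFactoring U K X := by
  induction hX generalizing K with
  | of hX => exact ⟨_, .of hX, φ, 𝟙 _, Category.comp_id φ⟩
  | zero hX => exact hX.eq_of_tgt φ 0 ▸ zero_mem _
  | coprod f _ e ih =>
    obtain ⟨s, ψ, hψ⟩ := isCompactObj_iff_exists_eq_sum.1 hK _ f (φ ≫ e.hom)
    rw [(Iso.eq_comp_inv e).2 hψ]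
    exact comp_mem_extFactoring
      (sum_mem fun a _ => comp_mem_extFactoring (ih a K hK (ψ a)) _) _
  | ext f g δ hT _ _ ihX ihZ =>
    exact mem_extFactoring_of_comp_mem hU hT ihX hK (ihZ K hK (φ ≫ g))
  | retract i r hir _ ih =>
    rw [← Category.comp_id φ, ← hir, ← Category.assoc]
    exact comp_mem_extFactoring (ih K hK (φ ≫ i)) r

theorem mem_extFactoring_of_approxTriangle {U : Set C} (hU : U ⊆ compacts C) {S : ℕ → Set C}
    (hS : ∀ n, ∀ F ∈ S n, approxTriangle C F {E | bigClosure C U E} (S (n + 1))) {k : ℕ}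
    {K : C} (hK : IsCompactObj C K) (hKS : K ∈ lOrth C (S k)) {F : C} (hF : F ∈ S 0)
    (φ : K ⟶ F) : φ ∈ extFactoring U K F := by
  induction k generalizing S F with
  | zero => exact hKS F hF φ ▸ zero_mem _
  | succ k ih =>
    obtain ⟨E, D, f, g, δ, hT, hE, hD⟩ := hS 0 F hF
    exact mem_extFactoring_of_comp_mem hU hT (mem_extFactoring_of_bigClosure hU hE) hK
      (ih (fun n => hS (n + 1)) hKS hD (φ ≫ g))

end CompactFactoring

section Metric

variable {C}

theorem inter_compacts_subset_MG {G S : ℤ → Set C} {A : ℤ} (hG : IsPreGenSeq C G)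
    (hvanish : ∀ n : ℤ, ∀ᶠ i in Filter.atTop, homZero C (G n) (S i))
    (happrox : ∀ i : ℤ, ∀ F ∈ S i, approxTriangle C F (gBarIic C G (A - i)) (S (i + 1)))
    (i : ℤ) : S i ∩ compacts C ⊆ MG C G (i - A) := by
  rintro F ⟨hF, hFc⟩
  have hU : unionIic C G (A - i) ⊆ compacts C := Set.iUnion₂_subset fun m _ => hG.compact m
  have happrox_nat (k : ℕ) (X : C) (hX : X ∈ S (i + k)) :
      approxTriangle C X (gBarIic C G (A - i)) (S (i + (k + 1 : ℕ))) := by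
    rw [Nat.cast_succ, ← add_assoc]
    exact approxTriangle_mono (gBarIic_mono G (by lia)) (happrox (i + k) X hX)
  have htendsto : Filter.Tendsto (fun k : ℕ => i + k) Filter.atTop Filter.atTop :=
    Filter.tendsto_atTop_add_const_left _ i tendsto_natCast_atTop_atTop
  obtain ⟨k, hk⟩ := (htendsto.eventually (hG.eventually_mem_lOrth hvanish hFc)).exists
  have hid : 𝟙 F ∈ extFactoring (unionIic C G (A - i)) F F :=
    mem_extFactoring_of_approxTriangle (S := fun k : ℕ => S (i + k)) hU happrox_nat hFc hk
      (by simpa using hF) (𝟙 F)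
  rw [MG, neg_sub]
  exact mem_smd_iff_id_mem_extFactoring.2 hid

end Metric

open scoped ZeroObject in
theorem statement_12_general (G Rm : ℤ → Set C) (A : ℤ) (hG : IsPreGenSeq C G)
    (hshift : ∀ i : ℤ, MG C G i ⊆ ⋃ n ∈ {n : ℤ | |n| ≤ A}, shiftSet C n (MG C G (i + 1)))
    (hMG : ∀ i : ℤ, MG C G (i + A) ⊆ Rm i)
    (hvanish : ∀ n : ℤ, ∃ N : ℤ, ∀ i : ℤ, N ≤ i → homZero C (G n) (Rm i))
    (happrox : ∀ i : ℤ, ∀ F ∈ Rm i ∩ closCompacts C Rm,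
      approxTriangle C F (gBarIic C G (A - i)) (Rm (i + 1) ∩ closCompacts C Rm)) :
    ∃ b : ℤ, 0 ≤ b ∧ ∀ i j : ℤ, 0 < j →
      Rm i ∩ compacts C ⊆
        ⋃ n ∈ {n : ℤ | |n| ≤ (j + 2 * b) * A}, shiftSet C n (Rm (i + j) ∩ compacts C) := by
  obtain ⟨n, hn, -⟩ := Set.mem_iUnion₂.1 (hshift 0 (zero_mem_MG G 0))
  have hA : 0 ≤ A := (abs_nonneg n).trans hn
  have hzero (n : ℤ) : (0 : C) ∈ Rm n := hMG n (zero_mem_MG G _)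
  have hvanish' (n : ℤ) :
      ∀ᶠ i in Filter.atTop, homZero C (G n) (Rm i ∩ closCompacts C Rm) :=
    (Filter.eventually_atTop.2 (hvanish n)).mono fun _ hi K hK Z hZ => hi K hK Z hZ.1
  refine ⟨A, hA, fun i j hj F hF => ?_⟩
  have hFMG : F ∈ MG C G (i - A) :=
    inter_compacts_subset_MG (S := fun i => Rm i ∩ closCompacts C Rm) hG hvanish' happrox i
      ⟨⟨hF.1, compacts_subset_closCompacts hzero hF.2⟩, hF.2⟩
  obtain ⟨k, hk⟩ := Int.eq_ofNat_of_zero_le (show 0 ≤ j + 2 * A by lia)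
  have hMGR : MG C G (i - A + k) ⊆ Rm (i + j) ∩ compacts C := by
    rw [← hk, show i - A + (j + 2 * A) = i + j + A by ring]
    exact Set.subset_inter (hMG _) (hG.MG_subset_compacts _)
  rw [hk]
  exact Set.iUnion₂_mono (fun n _ => shiftSet_mono hMGR n)
    (subset_iUnion_shiftSet_add_nat hshift (i - A) k hFMG)

theorem statement_12 (G Rm : ℤ → Set C) (A : ℤ)
    (hcg : CompactlyGenerated C) (hG : IsGenSeq C G)
    (h : IsWeakGQuasiApprox C G Rm A) :
    ∃ b : ℤ, 0 ≤ b ∧ ∀ i j : ℤ, 0 < j →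
      Rm i ∩ compacts C ⊆
        ⋃ n ∈ {n : ℤ | |n| ≤ (j + 2 * b) * A}, shiftSet C n (Rm (i + j) ∩ compacts C) :=
  statement_12_general C G Rm A hG.toIsPreGenSeq h.cond0 (fun i _ hF => (h.cond1 i hF).1) h.cond2
    fun i F hF => approxTriangle_mono (gBarInt_subset_gBarIic G _ _) (h.approx i F hF)

end GApprox
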